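/- Let (E, d) be a complete separable metric space (with its Borel σ-algebra) and let (u_i)_{i∈ℕ} be a sequence of pairwise distinct points of E whose range is dense in E. Then there exists a Borel measurable map Φ : (ℕ → ℝ) → E (where ℕ → ℝ carries the product topology and its Borel σ-algebra) such that whenever δ = (δ_i)_{i∈ℕ} satisfies conditions (A1)-(A3) — namely δ_i ≥ 0 for all i, inf_i δ_i = 0, and |δ_i − δ_j| ≤ d(u_i, u_j) ≤ δ_i + δ_j for all i, j — one has d(Φ(δ), u_i) = δ_i for all i ∈ ℕ. -/

import Mathlib

/-!
The map `y ↦ (dist y (u i))ᵢ` from `E` to `ℕ → ℝ` is continuous, and it is injective because `u`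
is dense. By the Lusin–Souslin theorem it is therefore a measurable embedding, so it has a
measurable left inverse `Φ`. It remains to see that every admissible `δ` is in its range
(`exists_point_of_distances`): indices along which `δ` tends to `0` give a Cauchy sequence of points `u i`,
whose limit has the prescribed distances.
-/

open Filter Topology in
/-- Existence of a point with prescribed distances `δ i` to the points `u i`, obtained as a limit of
points `u i` along which `δ i` tends to `0`. -/
lemma exists_point_of_distances {E : Type*} [MetricSpace E] [CompleteSpace E] (u : ℕ → E) (δ : ℕ → ℝ)
    (h_nonneg : ∀ i, 0 ≤ δ i) (h_inf : (⨅ i, δ i) = 0)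
    (h_dist : ∀ i j, |δ i - δ j| ≤ dist (u i) (u j) ∧ dist (u i) (u j) ≤ δ i + δ j) :
    ∃ y : E, ∀ i, dist y (u i) = δ i := by
  have h_small : ∀ n : ℕ, ∃ i, δ i < 1 / ((n : ℝ) + 1) := fun n =>
    exists_lt_of_ciInf_lt (by rw [h_inf]; positivity)
  choose k hk using h_small
  have hδk : Tendsto (fun n => δ (k n)) atTop (𝓝 0) :=
    squeeze_zero (fun n => h_nonneg _) (fun n => (hk n).le)
      tendsto_one_div_add_atTop_nhds_zero_nat
  have h_cauchy : CauchySeq fun n => u (k n) := by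
    refine cauchySeq_of_le_tendsto_0 (fun N : ℕ => 1 / ((N : ℝ) + 1) + 1 / ((N : ℝ) + 1))
      (fun n m N hn hm => ?_) ?_
    · exact (h_dist _ _).2.trans (add_le_add
        ((hk n).le.trans (Nat.one_div_le_one_div hn)) ((hk m).le.trans (Nat.one_div_le_one_div hm)))
    · simpa using (tendsto_one_div_add_atTop_nhds_zero_nat (𝕜 := ℝ)).add
        tendsto_one_div_add_atTop_nhds_zero_nat
  obtain ⟨y, hy⟩ := cauchySeq_tendsto_of_complete h_cauchy
  refine ⟨y, fun j => tendsto_nhds_unique (hy.dist tendsto_const_nhds) ?_⟩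
  refine tendsto_of_tendsto_of_tendsto_of_le_of_le (g := fun n => |δ (k n) - δ j|)
    (h := fun n => δ (k n) + δ j) ?_ ?_ (fun n => (h_dist _ _).1) (fun n => (h_dist _ _).2)
  · simpa [abs_of_nonneg (h_nonneg j)] using (hδk.sub_const (δ j)).abs
  · simpa using hδk.add_const (δ j)

/-- On a complete separable metric space `E` (Borel σ-algebra) with a dense
sequence `u` of pairwise distinct points, there exists a Borel measurable map
`Φ : (ℕ → ℝ) → E` such that for every sequence `δ` satisfying (A1)-(A3) one has
`dist (Φ δ) (u i) = δ i` for all `i`. -/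
theorem exists_measurable_reconstruction_map
    {E : Type*} [MetricSpace E] [CompleteSpace E] [TopologicalSpace.SeparableSpace E]
    [MeasurableSpace E] [BorelSpace E]
    (u : ℕ → E) (hu_inj : Function.Injective u) (hu_dense : DenseRange u) :
    ∃ Φ : (ℕ → ℝ) → E, Measurable Φ ∧
      ∀ δ : ℕ → ℝ,
        (∀ i, 0 ≤ δ i) →
        (⨅ i, δ i) = 0 →
        (∀ i j, |δ i - δ j| ≤ dist (u i) (u j) ∧ dist (u i) (u j) ≤ δ i + δ j) →
        ∀ i, dist (Φ δ) (u i) = δ i := by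
  have h_cont : Continuous fun (y : E) (i : ℕ) => dist y (u i) := by fun_prop
  have h_inj : Function.Injective fun (y : E) (i : ℕ) => dist y (u i) := by
    intro x y hxy
    -- The functions `dist x` and `dist y` agree on the dense range of `u`, hence at the point `y`.
    have h : (fun z => dist x z) = fun z => dist y z :=
      hu_dense.equalizer (by fun_prop) (by fun_prop) hxy
    exact dist_eq_zero.1 ((congrFun h y).trans (dist_self y))
  obtain ⟨Φ, hΦ, hΦ_left⟩ := (h_cont.measurableEmbedding h_inj).exists_measurable_extend
    measurable_id (fun _ => ⟨u 0⟩)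
  refine ⟨Φ, hΦ, fun δ h_nonneg h_inf h_dist i => ?_⟩
  obtain ⟨y, hy⟩ := exists_point_of_distances u δ h_nonneg h_inf h_dist
  have hδ : δ = fun i => dist y (u i) := funext fun i => (hy i).symm
  have hΦδ : Φ δ = y := by rw [hδ]; exact congrFun hΦ_left y
  rw [hΦδ, hy i]
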